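/- Let N = 2 and λ > 0. Let w₁, w₂ : ℝ² → ℝ be continuous functions, each with radial decay of rate √λ. Then there exist constants c, C, R₀ > 0 such that for all R ≥ R₀, c·R^{−1/2}·e^{−2√λ·R} ≤ ∫_{ℝ²} w₁(x)²·w₂(x − R·e₁)² dx ≤ C·R^{−1/2}·e^{−2√λ·R}. -/

import Mathlib

open MeasureTheory Real

/-- A continuous function `w : ℝ² → ℝ` has radial decay of rate `√lam`:
`w` is everywhere positive and there are `M, c, C > 0` with
`c‖x‖^{-1/2} e^{-√lam ‖x‖} ≤ w x ≤ C‖x‖^{-1/2} e^{-√lam ‖x‖}` for `‖x‖ ≥ M`. -/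
def HasRadialDecay2D (w : EuclideanSpace ℝ (Fin 2) → ℝ) (lam : ℝ) : Prop :=
  (∀ x, 0 < w x) ∧
  ∃ M c C : ℝ, 0 < M ∧ 0 < c ∧ 0 < C ∧
    ∀ x : EuclideanSpace ℝ (Fin 2), M ≤ ‖x‖ →
      c * ‖x‖ ^ (-(1 : ℝ) / 2) * Real.exp (-Real.sqrt lam * ‖x‖) ≤ w x ∧
      w x ≤ C * ‖x‖ ^ (-(1 : ℝ) / 2) * Real.exp (-Real.sqrt lam * ‖x‖)

/-!
Both `w₁²` and `w₂²` are continuous and positive, hence comparable on the whole plane, and not only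
at infinity, to the Yukawa profile `e^{-ar} / (1 + r)` with `a = 2√lam`. So only the two-centre
integral of this profile matters.

For the upper bound, take coordinates `(t, y)` along and across the axis. The inequality
`1 + z ≤ e^z` trades the excess `r - |t|` of the radius for a Cauchy kernel:
`e^{-ar} / (1 + r) ≤ e^{-a|t|} / (1 + |t| + a y² / 2)`. The denominators at the two centres add up
to at least `R`, so the product of the kernels is at most `R⁻¹` times their sum. Integrating one
kernel in `y` leaves a multiple of `(1 + |t|)^{-1/2}`, whose integral against
`e^{-a(|t| + |R - t|)}` is of order `R^{1/2} e^{-aR}`.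

For the lower bound, the integrand is at least of order `R⁻² e^{-aR}` on a box of length `R / 2`
along the axis and width `2√R` across it, because there `r - t` stays bounded.
-/

open Asymptotics Filter Module Set

noncomputable section

/-- The Yukawa profile `e^{-ar} / r`, with denominator shifted to `1 + r` to keep it bounded at the
origin. The square of a function with radial decay of rate `a / 2` is comparable to it. -/
def yukawa (a r : ℝ) : ℝ := exp (-a * r) / (1 + r)

/-- A majorant for the product of two Yukawa profiles whose centres are at distance `R`, in
coordinates `p = (t, y)` along and across the axis from the first centre to the second. Only the
denominator at the first centre appears; the reflection `p ↦ (R, 0) - p` exchanges the centres. -/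
def axialMajorant (a R : ℝ) (p : ℝ × ℝ) : ℝ :=
  exp (-a * (|p.1| + |R - p.1|)) * (1 + |p.1| + a / 2 * p.2 ^ 2)⁻¹

lemma yukawa_pos (a : ℝ) {r : ℝ} (hr : 0 ≤ r) : 0 < yukawa a r := by
  unfold yukawa
  positivity

lemma continuous_yukawa_norm {E : Type*} [SeminormedAddGroup E] (a : ℝ) :
    Continuous fun x : E => yukawa a ‖x‖ :=
  Continuous.div (by fun_prop) (by fun_prop) fun x => by positivity

lemma isBigO_top_of_isBigO_cocompact {X E F : Type*} [TopologicalSpace X]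
    [NormedAddCommGroup E] [NormedAddCommGroup F] {f : X → E} {g : X → F}
    (hf : Continuous f) (hg : Continuous g) (hg₀ : ∀ x, g x ≠ 0) (h : f =O[cocompact X] g) :
    f =O[⊤] g := by
  obtain ⟨c, hc⟩ := h.bound
  obtain ⟨K, hK, hKc⟩ := mem_cocompact.1 hc
  have hout : f =O[𝓟 Kᶜ] g := .of_bound c (mem_principal.2 hKc)
  have hin : f =O[𝓟 K] g :=
    (hf.continuousOn.isBigO_principal hK (c := (1 : ℝ)) (by simp)).trans
      (hg.continuousOn.isBigO_rev_principal hK (fun x _ => hg₀ x) 1)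
  simpa only [sup_principal, union_compl_self, principal_univ] using hin.sup hout

lemma rpow_neg_one_div_two {x : ℝ} (hx : 0 ≤ x) : x ^ (-(1 : ℝ) / 2) = (√x)⁻¹ := by
  rw [neg_div, rpow_neg hx, sqrt_eq_rpow]

lemma sq_rpow_mul_exp_isTheta_yukawa (b : ℝ) :
    (fun r => (r ^ (-(1 : ℝ) / 2) * exp (-b * r)) ^ 2) =Θ[atTop] yukawa (2 * b) := by
  have hsq : (fun r => r⁻¹ * exp (-(2 * b) * r)) =ᶠ[atTop]
      fun r => (r ^ (-(1 : ℝ) / 2) * exp (-b * r)) ^ 2 := by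
    filter_upwards [eventually_ge_atTop 0] with r hr
    rw [rpow_neg_one_div_two hr, mul_pow, inv_pow, sq_sqrt hr, ← exp_nat_mul]
    push_cast
    ring_nf
  refine hsq.symm.trans_isTheta ?_
  have hinv : (fun r : ℝ => r⁻¹) =Θ[atTop] fun r => (1 + r)⁻¹ :=
    ((isLittleO_const_id_atTop (1 : ℝ)).add_isTheta (isTheta_refl id _)).inv.symm
  have hyuk : yukawa (2 * b) = fun r => (1 + r)⁻¹ * exp (-(2 * b) * r) :=
    funext fun r => div_eq_inv_mul _ _
  rw [hyuk]
  exact hinv.mul (isTheta_refl (fun r => exp (-(2 * b) * r)) _)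

lemma HasRadialDecay2D.isTheta_cocompact {w : EuclideanSpace ℝ (Fin 2) → ℝ} {lam : ℝ}
    (h : HasRadialDecay2D w lam) :
    w =Θ[cocompact _] fun x => ‖x‖ ^ (-(1 : ℝ) / 2) * exp (-√lam * ‖x‖) := by
  obtain ⟨hpos, M, c, C, -, hc, -, hb⟩ := h
  have hM := (tendsto_norm_cocompact_atTop (E := EuclideanSpace ℝ (Fin 2))).eventually_ge_atTop M
  constructor
  · refine .of_bound C (hM.mono fun x hx => ?_)
    rw [norm_of_nonneg (hpos x).le, norm_of_nonneg (by positivity), ← mul_assoc]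
    exact (hb x hx).2
  · refine .of_bound c⁻¹ (hM.mono fun x hx => ?_)
    rw [norm_of_nonneg (hpos x).le, norm_of_nonneg (by positivity), le_inv_mul_iff₀ hc,
      ← mul_assoc]
    exact (hb x hx).1

lemma HasRadialDecay2D.exists_yukawa_le_sq_le {w : EuclideanSpace ℝ (Fin 2) → ℝ} {lam : ℝ}
    (h : HasRadialDecay2D w lam) (hw : Continuous w) :
    ∃ k K : ℝ, 0 < k ∧ 0 < K ∧ ∀ x,
      k * yukawa (2 * √lam) ‖x‖ ≤ w x ^ 2 ∧ w x ^ 2 ≤ K * yukawa (2 * √lam) ‖x‖ := by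
  have hprofile := sq_rpow_mul_exp_isTheta_yukawa √lam
  have hnorm := tendsto_norm_cocompact_atTop (E := EuclideanSpace ℝ (Fin 2))
  have hfar : (fun x => w x ^ 2) =Θ[cocompact _] fun x => yukawa (2 * √lam) ‖x‖ :=
    (h.isTheta_cocompact.pow 2).trans
      ⟨hprofile.1.comp_tendsto hnorm, hprofile.2.comp_tendsto hnorm⟩
  have hyuk (x : EuclideanSpace ℝ (Fin 2)) := yukawa_pos (2 * √lam) (norm_nonneg x)
  have hcont := continuous_yukawa_norm (E := EuclideanSpace ℝ (Fin 2)) (2 * √lam)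
  have hsq (x) : 0 < w x ^ 2 := pow_pos (h.1 x) 2
  obtain ⟨K, hK, hupper⟩ := (isBigO_top_of_isBigO_cocompact (f := fun x => w x ^ 2) (hw.pow 2) hcont
    (fun x => (hyuk x).ne') hfar.1).exists_pos
  obtain ⟨k, hk, hlower⟩ := (isBigO_top_of_isBigO_cocompact (g := fun x => w x ^ 2) hcont (hw.pow 2)
    (fun x => (hsq x).ne') hfar.2).exists_pos
  refine ⟨k⁻¹, K, inv_pos.2 hk, hK, fun x => ⟨?_, ?_⟩⟩
  · rw [inv_mul_le_iff₀ hk]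
    simpa only [norm_of_nonneg (hyuk x).le, norm_of_nonneg (hsq x).le] using
      isBigOWith_top.1 hlower x
  · simpa only [norm_of_nonneg (hyuk x).le, norm_of_nonneg (hsq x).le] using
      isBigOWith_top.1 hupper x

lemma exists_measurePreserving_axial_coords {E : Type*} [NormedAddCommGroup E]
    [InnerProductSpace ℝ E] [FiniteDimensional ℝ E] [MeasurableSpace E] [BorelSpace E]
    (hE : finrank ℝ E = 2) {e : E} (he : ‖e‖ = 1) :
    ∃ T : ℝ × ℝ ≃ᵐ E, MeasurePreserving T ∧
      ∀ p (R : ℝ), ‖T p - R • e‖ ^ 2 = (R - p.1) ^ 2 + p.2 ^ 2 := by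
  have honb : Orthonormal ℝ (({0} : Set (Fin 2)).domRestrict fun _ => e) :=
    ⟨fun _ => he, fun i j hij => absurd (Subsingleton.elim i j) hij⟩
  obtain ⟨b, hb⟩ := honb.exists_orthonormalBasis_extension_of_card_eq (by simpa using hE)
  let L : ℂ ≃ₗᵢ[ℝ] E := Complex.isometryOfOrthonormal b
  have hL (R : ℝ) : R • e = L R := by
    simp [L, Complex.isometryOfOrthonormal_apply, hb 0 rfl]
  refine ⟨Complex.measurableEquivRealProd.symm.trans L.toMeasurableEquiv,
    L.measurePreserving.comp (Complex.volume_preserving_equiv_real_prod.symm _), fun p R => ?_⟩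
  change ‖L ⟨p.1, p.2⟩ - R • e‖ ^ 2 = _
  rw [hL, ← map_sub, L.norm_map, Complex.sq_norm, Complex.normSq_apply]
  simp only [Complex.sub_re, Complex.sub_im, Complex.ofReal_re, Complex.ofReal_im]
  ring

lemma integral_inv_add_mul_sq {b c : ℝ} (hb : 0 < b) (hc : 0 < c) :
    ∫ y : ℝ, (b + c * y ^ 2)⁻¹ = π / √c * (√b)⁻¹ := by
  have hscale (y : ℝ) : (b + c * y ^ 2)⁻¹ = b⁻¹ * (1 + (√(c / b) * y) ^ 2)⁻¹ := by
    rw [mul_pow, sq_sqrt (by positivity), ← mul_inv]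
    field_simp
  simp_rw [hscale]
  rw [integral_const_mul, Measure.integral_comp_mul_left (fun y => (1 + y ^ 2)⁻¹),
    integral_univ_inv_one_add_sq, abs_of_pos (by positivity), sqrt_div hc.le, smul_eq_mul]
  nth_rw 1 [← sq_sqrt hb.le]
  field_simp

lemma integrable_inv_add_mul_sq {b c : ℝ} (hb : 0 < b) (hc : 0 < c) :
    Integrable fun y : ℝ => (b + c * y ^ 2)⁻¹ :=
  .of_integral_ne_zero (by rw [integral_inv_add_mul_sq hb hc]; positivity)

lemma integral_exp_neg_mul_abs {a : ℝ} (ha : 0 < a) : ∫ t : ℝ, exp (-a * |t|) = 2 / a := by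
  rw [integral_comp_abs (f := fun t => exp (-a * t)), integral_exp_mul_Ioi (neg_neg_of_pos ha)]
  simp [div_eq_mul_inv]

lemma integrable_exp_neg_mul_abs {a : ℝ} (ha : 0 < a) : Integrable fun t : ℝ => exp (-a * |t|) :=
  .of_integral_ne_zero (by rw [integral_exp_neg_mul_abs ha]; positivity)

lemma integrableOn_inv_sqrt (R : ℝ) : IntegrableOn (fun t => (√t)⁻¹) (Ioc 0 R) := by
  have := intervalIntegral.intervalIntegrable_rpow' (a := 0) (b := R)
    (r := -(1 : ℝ) / 2) (by norm_num)
  refine (this.1).congr_fun (fun t ht => ?_) measurableSet_Ioc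
  exact rpow_neg_one_div_two ht.1.le

lemma setIntegral_inv_sqrt {R : ℝ} (hR : 0 ≤ R) : ∫ t in Ioc 0 R, (√t)⁻¹ = 2 * √R := by
  calc ∫ t in Ioc 0 R, (√t)⁻¹ = ∫ t in Ioc 0 R, t ^ (-(1 : ℝ) / 2) :=
        setIntegral_congr_fun measurableSet_Ioc fun t ht => (rpow_neg_one_div_two ht.1.le).symm
    _ = R ^ (-(1 : ℝ) / 2 + 1) / (-(1 : ℝ) / 2 + 1) := by
        rw [← intervalIntegral.integral_of_le hR, integral_rpow (.inl (by norm_num)),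
          zero_rpow (by norm_num), sub_zero]
    _ = 2 * √R := by
        rw [sqrt_eq_rpow]
        norm_num
        ring

lemma yukawa_le_of_sq_eq {a r t y : ℝ} (ha : 0 ≤ a) (hr : 0 ≤ r) (h : r ^ 2 = t ^ 2 + y ^ 2) :
    yukawa a r ≤ exp (-a * |t|) * (1 + |t| + a / 2 * y ^ 2)⁻¹ := by
  have htr : |t| ≤ r := abs_le_of_sq_le_sq (by linarith [sq_nonneg y]) hr
  have hy : y ^ 2 = (r - |t|) * (r + |t|) := by linear_combination sq_abs t - h
  have hexp : 1 + a * (r - |t|) ≤ exp (a * (r - |t|)) := by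
    linarith [add_one_le_exp (a * (r - |t|))]
  have hden : 1 + |t| + a / 2 * y ^ 2 ≤ (1 + r) * exp (a * (r - |t|)) :=
    calc 1 + |t| + a / 2 * y ^ 2 ≤ (1 + r) * (1 + a * (r - |t|)) := by
          have := mul_nonneg ha (sub_nonneg.2 htr)
          rw [hy]
          nlinarith
      _ ≤ _ := by gcongr
  have hsplit : exp (-a * r) * exp (a * (r - |t|)) = exp (-a * |t|) := by
    rw [← exp_add]
    ring_nf
  rw [yukawa, ← div_eq_mul_inv, div_le_div_iff₀ (by positivity) (by positivity), ← hsplit]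
  calc _ ≤ exp (-a * r) * ((1 + r) * exp (a * (r - |t|))) := by gcongr
    _ = _ := by ring

lemma inv_mul_inv_le_of_le_add {A B R : ℝ} (hA : 0 < A) (hB : 0 < B) (hR : 0 < R)
    (h : R ≤ A + B) : A⁻¹ * B⁻¹ ≤ R⁻¹ * (A⁻¹ + B⁻¹) := by
  calc A⁻¹ * B⁻¹ = (A + B)⁻¹ * (A⁻¹ + B⁻¹) := by
        field_simp
        ring
    _ ≤ _ := by gcongr

lemma yukawa_mul_yukawa_le {a R r s : ℝ} {p : ℝ × ℝ} (ha : 0 ≤ a) (hR : 0 < R) (hr : 0 ≤ r)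
    (hs : 0 ≤ s) (hrp : r ^ 2 = p.1 ^ 2 + p.2 ^ 2) (hsp : s ^ 2 = (R - p.1) ^ 2 + p.2 ^ 2) :
    yukawa a r * yukawa a s ≤
      R⁻¹ * (axialMajorant a R p + axialMajorant a R ((R, 0) - p)) := by
  obtain ⟨t, y⟩ := p
  dsimp only at hrp hsp
  set A := 1 + |t| + a / 2 * y ^ 2 with hA
  set B := 1 + |R - t| + a / 2 * y ^ 2 with hB
  have hRAB : R ≤ A + B := by
    have : 0 ≤ a / 2 * y ^ 2 := by positivity
    linarith [le_abs_self t, le_abs_self (R - t)]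
  calc yukawa a r * yukawa a s ≤ exp (-a * |t|) * A⁻¹ * (exp (-a * |R - t|) * B⁻¹) := by
        gcongr
        · exact (yukawa_pos a hs).le
        · exact yukawa_le_of_sq_eq ha hr hrp
        · exact yukawa_le_of_sq_eq ha hs hsp
    _ = exp (-a * (|t| + |R - t|)) * (A⁻¹ * B⁻¹) := by
        rw [mul_add, exp_add]
        ring
    _ ≤ exp (-a * (|t| + |R - t|)) * (R⁻¹ * (A⁻¹ + B⁻¹)) := by
        refine mul_le_mul_of_nonneg_left ?_ (exp_pos _).le
        exact inv_mul_inv_le_of_le_add (by positivity) (by positivity) hR hRAB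
    _ = R⁻¹ * (axialMajorant a R (t, y) + axialMajorant a R ((R, 0) - (t, y))) := by
        simp only [axialMajorant, Prod.mk_sub_mk, zero_sub, neg_sq, sub_sub_cancel,
          add_comm |R - t|, ← hA, ← hB]
        ring

lemma exp_mul_inv_sqrt_le {a : ℝ} (ha : 0 ≤ a) (R t : ℝ) :
    exp (-a * (|t| + |R - t|)) * (√(1 + |t|))⁻¹ ≤
      exp (-a * R) *
        ((Ioc 0 R).indicator (fun t => (√t)⁻¹) t + (exp (-a * |t|) + exp (-a * |R - t|))) := by
  have hsqrt : (√(1 + |t|))⁻¹ ≤ 1 := inv_le_one_of_one_le₀ (one_le_sqrt.2 (by simp))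
  have hexp {u : ℝ} (hu : R + u ≤ |t| + |R - t|) :
      exp (-a * (|t| + |R - t|)) ≤ exp (-a * R) * exp (-a * u) := by
    rw [← exp_add, exp_le_exp]
    nlinarith
  by_cases ht : t ∈ Ioc 0 R
  · have hle : (√(1 + |t|))⁻¹ ≤ (√t)⁻¹ :=
      inv_anti₀ (sqrt_pos.2 ht.1) (sqrt_le_sqrt (by linarith [le_abs_self t]))
    rw [indicator_of_mem ht]
    have hRt : R + 0 ≤ |t| + |R - t| := by linarith [le_abs_self t, le_abs_self (R - t)]
    exact mul_le_mul (by simpa only [mul_zero, exp_zero, mul_one] using hexp hRt)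
      (hle.trans (le_add_of_nonneg_right (by positivity))) (by positivity) (exp_pos _).le
  · rw [indicator_of_notMem ht, zero_add]
    refine (mul_le_of_le_one_right (exp_pos _).le hsqrt).trans ?_
    rcases le_or_gt t 0 with ht₀ | ht₀
    · have := le_abs_self (R - t)
      refine (hexp (u := |t|) (by linarith [abs_of_nonpos ht₀])).trans ?_
      gcongr
      exact le_add_of_nonneg_right (exp_pos _).le
    · have htR : R < t := by_contra fun h => ht ⟨ht₀, not_lt.1 h⟩
      refine (hexp (u := |R - t|) (by linarith [le_abs_self t])).trans ?_
      gcongr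
      exact le_add_of_nonneg_left (exp_pos _).le

lemma integrable_indicator_inv_sqrt_add_exp {a : ℝ} (ha : 0 < a) (R : ℝ) :
    Integrable fun t => exp (-a * R) *
      ((Ioc 0 R).indicator (fun t => (√t)⁻¹) t + (exp (-a * |t|) + exp (-a * |R - t|))) :=
  have hsqrt := (integrableOn_inv_sqrt R).integrable_indicator measurableSet_Ioc
  have hexp := integrable_exp_neg_mul_abs ha
  (hsqrt.add (hexp.add (hexp.comp_sub_left R))).const_mul _

lemma integrable_exp_mul_inv_sqrt {a : ℝ} (ha : 0 < a) (R : ℝ) :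
    Integrable fun t => exp (-a * (|t| + |R - t|)) * (√(1 + |t|))⁻¹ := by
  have hcont : Continuous fun t => exp (-a * (|t| + |R - t|)) * (√(1 + |t|))⁻¹ :=
    .mul (by fun_prop) (.inv₀ (by fun_prop) fun t => by positivity)
  refine (integrable_indicator_inv_sqrt_add_exp ha R).mono' hcont.aestronglyMeasurable
    (.of_forall fun t => ?_)
  rw [norm_of_nonneg (by positivity)]
  exact exp_mul_inv_sqrt_le ha.le R t

lemma integral_exp_mul_inv_sqrt_le {a R : ℝ} (ha : 0 < a) (hR : 0 ≤ R) :
    ∫ t, exp (-a * (|t| + |R - t|)) * (√(1 + |t|))⁻¹ ≤ exp (-a * R) * (2 * √R + 4 / a) := by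
  have hsqrt := (integrableOn_inv_sqrt R).integrable_indicator measurableSet_Ioc
  have hexp := integrable_exp_neg_mul_abs ha
  have hexp' := hexp.comp_sub_left R
  have hsum : Integrable fun t => exp (-a * |t|) + exp (-a * |R - t|) := hexp.add hexp'
  refine (integral_mono (integrable_exp_mul_inv_sqrt ha R)
    (integrable_indicator_inv_sqrt_add_exp ha R) (exp_mul_inv_sqrt_le ha.le R)).trans_eq ?_
  rw [integral_const_mul, integral_add hsqrt hsum, integral_add hexp hexp',
    integral_sub_left_eq_self (fun t => exp (-a * |t|)), integral_indicator measurableSet_Ioc,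
    setIntegral_inv_sqrt hR, integral_exp_neg_mul_abs ha]
  ring

lemma axialMajorant_nonneg {a : ℝ} (ha : 0 ≤ a) (R : ℝ) (p : ℝ × ℝ) :
    0 ≤ axialMajorant a R p := by
  unfold axialMajorant
  positivity

lemma integral_axialMajorant_mk {a : ℝ} (ha : 0 < a) (R t : ℝ) :
    ∫ y, axialMajorant a R (t, y) =
      π / √(a / 2) * (exp (-a * (|t| + |R - t|)) * (√(1 + |t|))⁻¹) := by
  simp only [axialMajorant]
  rw [integral_const_mul, integral_inv_add_mul_sq (by positivity) (by positivity)]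
  ring

lemma integrable_axialMajorant {a : ℝ} (ha : 0 < a) (R : ℝ) :
    Integrable (axialMajorant a R) := by
  have hcont : Continuous (axialMajorant a R) :=
    .mul (by fun_prop) (.inv₀ (by fun_prop) fun p => by positivity)
  refine (integrable_prod_iff hcont.aestronglyMeasurable).2 ⟨.of_forall fun t => ?_, ?_⟩
  · exact (integrable_inv_add_mul_sq (b := 1 + |t|) (c := a / 2) (by positivity)
      (by positivity)).const_mul (exp (-a * (|t| + |R - t|)))
  · simp only [norm_of_nonneg (axialMajorant_nonneg ha.le R _), integral_axialMajorant_mk ha]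
    exact (integrable_exp_mul_inv_sqrt ha R).const_mul _

lemma integral_axialMajorant_le {a R : ℝ} (ha : 0 < a) (hR : 0 ≤ R) :
    ∫ p, axialMajorant a R p ≤ π / √(a / 2) * (exp (-a * R) * (2 * √R + 4 / a)) := by
  rw [Measure.volume_eq_prod, integral_prod _ (integrable_axialMajorant ha R)]
  simp only [integral_axialMajorant_mk ha]
  rw [integral_const_mul]
  gcongr
  exact integral_exp_mul_inv_sqrt_le ha hR

lemma le_yukawa_of_sq_eq {a R r t y : ℝ} (ha : 0 ≤ a) (hR : 12 ≤ R) (hr : 0 ≤ r)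
    (ht : t ∈ Icc (R / 4) (3 * R / 4)) (hy : y ^ 2 ≤ R) (h : r ^ 2 = t ^ 2 + y ^ 2) :
    R⁻¹ * exp (-a * (t + 2)) ≤ yukawa a r := by
  have hrt : r ≤ t + 2 := abs_le_of_sq_le_sq' (by linarith [ht.1]) (by linarith [ht.1]) |>.2
  rw [yukawa, div_eq_inv_mul]
  refine mul_le_mul (inv_anti₀ (by positivity) (by linarith [ht.2])) ?_ (by positivity)
    (by positivity)
  exact exp_le_exp.2 (by nlinarith)

lemma le_yukawa_mul_yukawa {a R r s : ℝ} {p : ℝ × ℝ} (ha : 0 ≤ a) (hR : 12 ≤ R) (hr : 0 ≤ r)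
    (hs : 0 ≤ s) (ht : p.1 ∈ Icc (R / 4) (3 * R / 4)) (hy : p.2 ^ 2 ≤ R)
    (hrp : r ^ 2 = p.1 ^ 2 + p.2 ^ 2) (hsp : s ^ 2 = (R - p.1) ^ 2 + p.2 ^ 2) :
    R⁻¹ ^ 2 * exp (-4 * a) * exp (-a * R) ≤ yukawa a r * yukawa a s := by
  have ht' : R - p.1 ∈ Icc (R / 4) (3 * R / 4) := ⟨by linarith [ht.2], by linarith [ht.1]⟩
  calc R⁻¹ ^ 2 * exp (-4 * a) * exp (-a * R)
      = (R⁻¹ * exp (-a * (p.1 + 2))) * (R⁻¹ * exp (-a * (R - p.1 + 2))) := by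
        rw [mul_mul_mul_comm, ← exp_add, mul_assoc, ← exp_add]
        ring_nf
    _ ≤ yukawa a r * yukawa a s := by
        gcongr
        · exact (yukawa_pos a hr).le
        · exact le_yukawa_of_sq_eq ha hR hr ht hy hrp
        · exact le_yukawa_of_sq_eq ha hR hs ht' hy hsp

lemma yukawa_mul_yukawa_nonneg {E : Type*} [SeminormedAddGroup E] (a : ℝ) (x y : E) :
    0 ≤ yukawa a ‖x‖ * yukawa a ‖y‖ :=
  mul_nonneg (yukawa_pos a (norm_nonneg x)).le (yukawa_pos a (norm_nonneg y)).le

lemma continuous_yukawa_mul_yukawa {E : Type*} [SeminormedAddCommGroup E] (a : ℝ) (z : E) :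
    Continuous fun x : E => yukawa a ‖x‖ * yukawa a ‖x - z‖ :=
  (continuous_yukawa_norm a).mul ((continuous_yukawa_norm a).comp (by fun_prop))

section TwoPoint

variable {E : Type*} [NormedAddCommGroup E] [InnerProductSpace ℝ E] [FiniteDimensional ℝ E]
  [MeasurableSpace E] [BorelSpace E] {a R : ℝ} {e : E}

lemma integrable_yukawa_mul_yukawa (hE : finrank ℝ E = 2) (he : ‖e‖ = 1) (ha : 0 < a)
    (hR : 0 < R) : Integrable fun x : E => yukawa a ‖x‖ * yukawa a ‖x - R • e‖ := by
  obtain ⟨T, hT, hTn⟩ := exists_measurePreserving_axial_coords hE he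
  have hmaj := integrable_axialMajorant ha R
  refine (hT.integrable_comp_emb T.measurableEmbedding).1 <|
    ((hmaj.add (hmaj.comp_sub_left (R, 0))).const_mul R⁻¹).mono' ?_ (.of_forall fun p => ?_)
  · exact ((continuous_yukawa_mul_yukawa a (R • e)).measurable.comp
      T.measurable).aestronglyMeasurable
  · rw [Function.comp_apply, norm_of_nonneg (yukawa_mul_yukawa_nonneg a _ _)]
    exact yukawa_mul_yukawa_le ha.le hR (norm_nonneg _) (norm_nonneg _)
      (by simpa using hTn p 0) (hTn p R)

lemma integral_yukawa_mul_yukawa_le_integral_axialMajorant (hE : finrank ℝ E = 2) (he : ‖e‖ = 1)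
    (ha : 0 < a) (hR : 0 < R) :
    ∫ x : E, yukawa a ‖x‖ * yukawa a ‖x - R • e‖ ≤ R⁻¹ * (2 * ∫ p, axialMajorant a R p) := by
  obtain ⟨T, hT, hTn⟩ := exists_measurePreserving_axial_coords hE he
  have hmaj := integrable_axialMajorant ha R
  have hmaj' := hmaj.comp_sub_left (R, 0)
  have hint : Integrable fun p => yukawa a ‖T p‖ * yukawa a ‖T p - R • e‖ :=
    (hT.integrable_comp_emb T.measurableEmbedding).2 (integrable_yukawa_mul_yukawa hE he ha hR)
  calc ∫ x : E, yukawa a ‖x‖ * yukawa a ‖x - R • e‖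
      = ∫ p, yukawa a ‖T p‖ * yukawa a ‖T p - R • e‖ :=
        (hT.integral_comp' fun x => yukawa a ‖x‖ * yukawa a ‖x - R • e‖).symm
    _ ≤ ∫ p, R⁻¹ * (axialMajorant a R p + axialMajorant a R ((R, 0) - p)) :=
        integral_mono hint ((hmaj.add hmaj').const_mul R⁻¹) fun p =>
          yukawa_mul_yukawa_le ha.le hR (norm_nonneg _) (norm_nonneg _)
            (by simpa using hTn p 0) (hTn p R)
    _ = R⁻¹ * (2 * ∫ p, axialMajorant a R p) := by
        rw [integral_const_mul, integral_add hmaj hmaj', integral_sub_left_eq_self, two_mul]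

lemma integral_yukawa_mul_yukawa_le (hE : finrank ℝ E = 2) (he : ‖e‖ = 1) (ha : 0 < a)
    (hR : 1 ≤ R) :
    ∫ x : E, yukawa a ‖x‖ * yukawa a ‖x - R • e‖ ≤
      2 * (π / √(a / 2)) * (2 + 4 / a) * (√R)⁻¹ * exp (-a * R) := by
  have hR₀ : 0 < R := by linarith
  have hsqrt : 2 * √R + 4 / a ≤ (2 + 4 / a) * √R := by
    rw [add_mul]
    gcongr
    exact le_mul_of_one_le_right (by positivity) (one_le_sqrt.2 hR)
  calc ∫ x : E, yukawa a ‖x‖ * yukawa a ‖x - R • e‖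
      ≤ R⁻¹ * (2 * ∫ p, axialMajorant a R p) :=
        integral_yukawa_mul_yukawa_le_integral_axialMajorant hE he ha hR₀
    _ ≤ R⁻¹ * (2 * (π / √(a / 2) * (exp (-a * R) * (2 * √R + 4 / a)))) := by
        gcongr
        exact integral_axialMajorant_le ha hR₀.le
    _ ≤ R⁻¹ * (2 * (π / √(a / 2) * (exp (-a * R) * ((2 + 4 / a) * √R)))) := by gcongr
    _ = 2 * (π / √(a / 2)) * (2 + 4 / a) * (√R / R) * exp (-a * R) := by ring
    _ = _ := by rw [sqrt_div_self', one_div]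

lemma le_integral_yukawa_mul_yukawa (hE : finrank ℝ E = 2) (he : ‖e‖ = 1) (ha : 0 < a)
    (hR : 12 ≤ R) :
    exp (-4 * a) * (√R)⁻¹ * exp (-a * R) ≤
      ∫ x : E, yukawa a ‖x‖ * yukawa a ‖x - R • e‖ := by
  have hR₀ : 0 < R := by linarith
  obtain ⟨T, hT, hTn⟩ := exists_measurePreserving_axial_coords hE he
  let S : Set (ℝ × ℝ) := Icc (R / 4) (3 * R / 4) ×ˢ Icc (-√R) √R
  have hvol : volume.real S = R * √R := by
    rw [Measure.volume_eq_prod, measureReal_prod_prod, volume_real_Icc_of_le (by linarith),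
      volume_real_Icc_of_le (by linarith [sqrt_nonneg R])]
    ring
  have hint : Integrable fun p => yukawa a ‖T p‖ * yukawa a ‖T p - R • e‖ :=
    (hT.integrable_comp_emb T.measurableEmbedding).2
      (integrable_yukawa_mul_yukawa hE he ha hR₀)
  have hS (p : ℝ × ℝ) (hp : p ∈ S) : R⁻¹ ^ 2 * exp (-4 * a) * exp (-a * R) ≤
      yukawa a ‖T p‖ * yukawa a ‖T p - R • e‖ :=
    le_yukawa_mul_yukawa ha.le hR (norm_nonneg _) (norm_nonneg _) hp.1
      (by simpa only [sq_sqrt hR₀.le] using sq_le_sq' hp.2.1 hp.2.2) (by simpa using hTn p 0)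
      (hTn p R)
  calc exp (-4 * a) * (√R)⁻¹ * exp (-a * R)
      = R⁻¹ ^ 2 * exp (-4 * a) * exp (-a * R) * volume.real S := by
        rw [hvol, ← one_div √R, ← sqrt_div_self']
        field_simp
    _ ≤ ∫ p in S, yukawa a ‖T p‖ * yukawa a ‖T p - R • e‖ :=
        setIntegral_ge_of_const_le_real (measurableSet_Icc.prod measurableSet_Icc)
          (isCompact_Icc.prod isCompact_Icc).measure_lt_top.ne hS hint.integrableOn
    _ ≤ ∫ p, yukawa a ‖T p‖ * yukawa a ‖T p - R • e‖ :=
        setIntegral_le_integral hint (.of_forall fun p => yukawa_mul_yukawa_nonneg a _ _)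
    _ = ∫ x : E, yukawa a ‖x‖ * yukawa a ‖x - R • e‖ :=
        hT.integral_comp' fun x => yukawa a ‖x‖ * yukawa a ‖x - R • e‖

end TwoPoint

lemma HasRadialDecay2D.exists_interaction_bounds {w₁ w₂ : EuclideanSpace ℝ (Fin 2) → ℝ}
    {lam₁ lam₂ : ℝ} (hw₁ : HasRadialDecay2D w₁ lam₁) (hw₂ : HasRadialDecay2D w₂ lam₂)
    (hw₁c : Continuous w₁) (hw₂c : Continuous w₂) :
    ∃ k K : ℝ, 0 < k ∧ 0 < K ∧ ∀ z,
      Integrable (fun x => yukawa (2 * √lam₁) ‖x‖ * yukawa (2 * √lam₂) ‖x - z‖) →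
      k * ∫ x, yukawa (2 * √lam₁) ‖x‖ * yukawa (2 * √lam₂) ‖x - z‖ ≤
          ∫ x, w₁ x ^ 2 * w₂ (x - z) ^ 2 ∧
        ∫ x, w₁ x ^ 2 * w₂ (x - z) ^ 2 ≤
          K * ∫ x, yukawa (2 * √lam₁) ‖x‖ * yukawa (2 * √lam₂) ‖x - z‖ := by
  obtain ⟨k₁, K₁, hk₁, hK₁, hb₁⟩ := hw₁.exists_yukawa_le_sq_le hw₁c
  obtain ⟨k₂, K₂, hk₂, hK₂, hb₂⟩ := hw₂.exists_yukawa_le_sq_le hw₂c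
  refine ⟨k₁ * k₂, K₁ * K₂, mul_pos hk₁ hk₂, mul_pos hK₁ hK₂, fun z hint => ?_⟩
  have hpos (lam) (x : EuclideanSpace ℝ (Fin 2)) := (yukawa_pos (2 * √lam) (norm_nonneg x)).le
  have hle (x) : w₁ x ^ 2 * w₂ (x - z) ^ 2 ≤
      K₁ * K₂ * (yukawa (2 * √lam₁) ‖x‖ * yukawa (2 * √lam₂) ‖x - z‖) := by
    rw [mul_mul_mul_comm]
    exact mul_le_mul (hb₁ x).2 (hb₂ _).2 (sq_nonneg _) (mul_nonneg hK₁.le (hpos _ x))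
  have hge (x) : k₁ * k₂ * (yukawa (2 * √lam₁) ‖x‖ * yukawa (2 * √lam₂) ‖x - z‖) ≤
      w₁ x ^ 2 * w₂ (x - z) ^ 2 := by
    rw [mul_mul_mul_comm]
    exact mul_le_mul (hb₁ x).1 (hb₂ _).1 (mul_nonneg hk₂.le (hpos _ _)) (sq_nonneg _)
  have hint_w : Integrable fun x => w₁ x ^ 2 * w₂ (x - z) ^ 2 := by
    refine (hint.const_mul (K₁ * K₂)).mono' (by fun_prop) (.of_forall fun x => ?_)
    rw [norm_of_nonneg (by positivity)]
    exact hle x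
  simp only [← integral_const_mul]
  exact ⟨integral_mono (hint.const_mul _) hint_w hge,
    integral_mono hint_w (hint.const_mul _) hle⟩

end

theorem interaction_estimate_equal_rates_dim_two
    (lam : ℝ) (hlam : 0 < lam)
    (w₁ w₂ : EuclideanSpace ℝ (Fin 2) → ℝ)
    (hw₁c : Continuous w₁) (hw₂c : Continuous w₂)
    (hw₁ : HasRadialDecay2D w₁ lam) (hw₂ : HasRadialDecay2D w₂ lam)
    (e₁ : EuclideanSpace ℝ (Fin 2)) (he₁ : ‖e₁‖ = 1) :
    ∃ c C R₀ : ℝ, 0 < c ∧ 0 < C ∧ 0 < R₀ ∧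
      ∀ R : ℝ, R₀ ≤ R →
        c * R ^ (-(1 : ℝ) / 2) * Real.exp (-2 * Real.sqrt lam * R)
            ≤ (∫ x, (w₁ x) ^ 2 * (w₂ (x - R • e₁)) ^ 2) ∧
        (∫ x, (w₁ x) ^ 2 * (w₂ (x - R • e₁)) ^ 2)
            ≤ C * R ^ (-(1 : ℝ) / 2) * Real.exp (-2 * Real.sqrt lam * R) := by
  have ha : 0 < 2 * √lam := by positivity
  obtain ⟨k, K, hk, hK, hkK⟩ := hw₁.exists_interaction_bounds hw₂ hw₁c hw₂c
  refine ⟨k * exp (-4 * (2 * √lam)), K * (2 * (π / √(2 * √lam / 2)) * (2 + 4 / (2 * √lam))), 12,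
    by positivity, by positivity, by norm_num, fun R hR => ?_⟩
  have hE : finrank ℝ (EuclideanSpace ℝ (Fin 2)) = 2 := finrank_euclideanSpace_fin
  have hlower := le_integral_yukawa_mul_yukawa hE he₁ ha hR
  have hupper := integral_yukawa_mul_yukawa_le hE he₁ ha (show 1 ≤ R by linarith)
  obtain ⟨hge, hle⟩ :=
    hkK (R • e₁) (integrable_yukawa_mul_yukawa hE he₁ ha (by linarith))
  rw [rpow_neg_one_div_two (by linarith), neg_mul 2 √lam]
  constructor
  · calc k * exp (-4 * (2 * √lam)) * (√R)⁻¹ * exp (-(2 * √lam) * R)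
        = k * (exp (-4 * (2 * √lam)) * (√R)⁻¹ * exp (-(2 * √lam) * R)) := by ring
      _ ≤ _ := (mul_le_mul_of_nonneg_left hlower hk.le).trans hge
  · exact (hle.trans (mul_le_mul_of_nonneg_left hupper hK.le)).trans_eq (by ring)
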